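/- Let Γ₁ = ℤ[i] and Γ₂ = ⟨u, v⟩_ℤ for ℝ-linearly independent u, v ∈ ℤ[i]. If Im(u·conj(v)) divides each of Re(u²), Re(v²), and Re(uv), but divides none of N(u), N(v), and Re(u·conj(v)), then the point group of the color group H of the coloring of Γ₁ determined by Γ₂ is the group of order 4 consisting of the identity, the 180°-rotation z ↦ −z, the diagonal reflection z ↦ i·conj(z), and the diagonal reflection z ↦ −i·conj(z) (so the color group is of type cmm). -/

import Mathlib

open Complex

/-- A symmetry `h` of the plane (identified with `ℂ`) is a *color symmetry* of the
coloring of `Γ₁` determined by its subgroup `Γ₂` (each coset of `Γ₂` is one color) if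
there is a permutation `σ` of the colors with `c (h ℓ) = σ (c ℓ)` for all `ℓ ∈ Γ₁`. -/
def IsColorSymmetry (Γ₁ Γ₂ : AddSubgroup ℂ) (h : ℂ → ℂ) : Prop :=
  ∃ σ : Equiv.Perm (ℂ ⧸ Γ₂), ∀ ℓ ∈ Γ₁,
    (QuotientAddGroup.mk (h ℓ) : ℂ ⧸ Γ₂) = σ (QuotientAddGroup.mk ℓ)

/-- The point group `P(H)` of the color group `H` of the coloring of `Γ₁` determined by
`Γ₂`: all isometries of the plane fixing the origin, mapping `Γ₁` onto itself, and
permuting the colors. -/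
def pointColorGroup (Γ₁ Γ₂ : AddSubgroup ℂ) : Set (ℂ → ℂ) :=
  {g | Isometry g ∧ Function.Surjective g ∧ g 0 = 0 ∧
    g '' (Γ₁ : Set ℂ) = Γ₁ ∧ IsColorSymmetry Γ₁ Γ₂ g}

/-!
The point group of `H` consists of the symmetries of the square lattice that preserve `Γ₂`.
By Cramer's rule, `Im(u·conj v) w = Im(w·conj v) u - Im(w·conj u) v`, so `w` lies in `⟨u, v⟩_ℤ` iff
`Im(u·conj v)` divides both coefficients. Applied to the images of `u` and `v`, this says that the
diagonal reflection `z ↦ i·conj z` preserves `Γ₂` iff `Im(u·conj v)` divides `Re(u²)`, `Re(v²)` and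
`Re(uv)`, and that multiplication by `i` does iff it divides `N(u)`, `N(v)` and `Re(u·conj v)`.
If the first preserves `Γ₂` and the second does not, then neither does their composite, which is
complex conjugation. Every symmetry is one of these maps or the identity, up to sign.
-/

open ComplexConjugate

section ColorSymmetry

variable {Γ₁ Γ₂ : AddSubgroup ℂ}

theorem mem_iff_of_isColorSymmetry {h : ℂ → ℂ} (h0 : h 0 = 0) (hh : IsColorSymmetry Γ₁ Γ₂ h)
    {z : ℂ} (hz : z ∈ Γ₁) : h z ∈ Γ₂ ↔ z ∈ Γ₂ := by
  obtain ⟨σ, hσ⟩ := hh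
  have hσ0 : σ 0 = 0 := by simpa [h0] using (hσ 0 Γ₁.zero_mem).symm
  rw [← QuotientAddGroup.eq_zero_iff, ← QuotientAddGroup.eq_zero_iff, hσ z hz]
  exact ⟨fun hzero => σ.injective (hzero.trans hσ0.symm), fun hzero => by rw [hzero, hσ0]⟩

theorem image_eq_of_isColorSymmetry (hle : Γ₂ ≤ Γ₁) {h : ℂ → ℂ} (h0 : h 0 = 0)
    (hΓ₁ : h '' Γ₁ = Γ₁) (hh : IsColorSymmetry Γ₁ Γ₂ h) : h '' Γ₂ = (Γ₂ : Set ℂ) := by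
  ext w
  constructor
  · rintro ⟨z, hz, rfl⟩
    exact (mem_iff_of_isColorSymmetry h0 hh (hle hz)).2 hz
  · intro hw
    obtain ⟨z, hz, rfl⟩ := hΓ₁.superset (hle hw)
    exact ⟨z, (mem_iff_of_isColorSymmetry h0 hh hz).1 hw, rfl⟩

theorem isColorSymmetry_of_image_eq (Γ₁ : AddSubgroup ℂ) (f : ℂ ≃+ ℂ)
    (hf : f '' Γ₂ = Γ₂) : IsColorSymmetry Γ₁ Γ₂ f :=
  have hmap : Γ₂.map (f : ℂ →+ ℂ) = Γ₂ := SetLike.coe_injective hf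
  ⟨(QuotientAddGroup.congr Γ₂ Γ₂ f hmap).toEquiv, fun _ _ => rfl⟩

theorem mem_pointColorGroup_iff (hle : Γ₂ ≤ Γ₁) {g : ℂ → ℂ} :
    g ∈ pointColorGroup Γ₁ Γ₂ ↔
      ∃ f : ℂ ≃ₗᵢ[ℝ] ℂ, ⇑f = g ∧ f '' Γ₁ = Γ₁ ∧ f '' Γ₂ = Γ₂ := by
  constructor
  · rintro ⟨hiso, hsurj, h0, hΓ₁, hcolor⟩
    let e : ℂ ≃ᵢ ℂ := ⟨Equiv.ofBijective g ⟨hiso.injective, hsurj⟩, hiso⟩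
    exact ⟨e.toRealLinearIsometryEquivOfMapZero h0, rfl, hΓ₁,
      image_eq_of_isColorSymmetry hle h0 hΓ₁ hcolor⟩
  · rintro ⟨f, rfl, hΓ₁, hΓ₂⟩
    exact ⟨f.isometry, f.surjective, map_zero f, hΓ₁,
      isColorSymmetry_of_image_eq Γ₁ f.toLinearEquiv.toAddEquiv hΓ₂⟩

end ColorSymmetry

theorem image_eq_of_mapsTo_of_iterate_eq_id {α : Type*} {f : α → α} {s : Set α} {n : ℕ}
    (hf : f^[n + 1] = id) (hs : Set.MapsTo f s s) : f '' s = s := by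
  refine hs.image_subset.antisymm fun x hx => ⟨f^[n] x, hs.iterate n hx, ?_⟩
  rw [← Function.iterate_succ_apply' f, hf, id]

/-- The square lattice `ℤ[i]` as an additive subgroup of the plane. -/
def squareLattice : AddSubgroup ℂ := AddSubgroup.closure {1, I}

theorem mem_squareLattice_iff {z : ℂ} : z ∈ squareLattice ↔ ∃ a b : ℤ, a + b * I = z := by
  simp [squareLattice, AddSubgroup.mem_closure_pair]

theorem I_mul_mem_squareLattice {z : ℂ} (hz : z ∈ squareLattice) : I * z ∈ squareLattice := by
  obtain ⟨a, b, rfl⟩ := mem_squareLattice_iff.1 hz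
  refine mem_squareLattice_iff.2 ⟨-b, a, ?_⟩
  push_cast
  linear_combination (-b : ℂ) * I_mul_I

theorem conj_mem_squareLattice {z : ℂ} (hz : z ∈ squareLattice) : conj z ∈ squareLattice := by
  obtain ⟨a, b, rfl⟩ := mem_squareLattice_iff.1 hz
  exact mem_squareLattice_iff.2 ⟨a, -b, by simp⟩

/-- The units `±1, ±i` of `ℤ[i]`, as points of the plane. -/
def gaussianUnits : Set ℂ := {1, -1, I, -I}

theorem norm_eq_one_of_mem_gaussianUnits {ε : ℂ} (hε : ε ∈ gaussianUnits) : ‖ε‖ = 1 := by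
  obtain rfl | rfl | rfl | rfl := hε <;> simp

theorem mem_gaussianUnits_of_norm_eq_one {ε : ℂ} (hε : ε ∈ squareLattice) (hnorm : ‖ε‖ = 1) :
    ε ∈ gaussianUnits := by
  obtain ⟨a, b, rfl⟩ := mem_squareLattice_iff.1 hε
  have hsq : (a : ℝ) ^ 2 + (b : ℝ) ^ 2 = 1 := by
    rw [← normSq_add_mul_I, normSq_eq_norm_sq]
    push_cast
    rw [hnorm, one_pow]
  have hab : a ^ 2 + b ^ 2 = 1 := by exact_mod_cast hsq
  obtain ⟨_, _⟩ := abs_le.1 ((sq_le_one_iff_abs_le_one a).1 (by linarith [sq_nonneg b]))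
  obtain ⟨_, _⟩ := abs_le.1 ((sq_le_one_iff_abs_le_one b).1 (by linarith [sq_nonneg a]))
  interval_cases a <;> interval_cases b <;> simp_all [gaussianUnits]

theorem gaussianUnit_mul_mem_squareLattice {ε z : ℂ} (hε : ε ∈ gaussianUnits)
    (hz : z ∈ squareLattice) : ε * z ∈ squareLattice := by
  obtain rfl | rfl | rfl | rfl := hε
  · simpa using hz
  · simpa using hz
  · exact I_mul_mem_squareLattice hz
  · simpa using I_mul_mem_squareLattice hz

/-- The point group `P(G)` of the symmetry group `p4m` of the square lattice, as a set of maps: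
the identity and complex conjugation, each followed by multiplication by a unit of `ℤ[i]`. -/
def squarePointGroup : Set (ℂ → ℂ) :=
  {g | ∃ ε ∈ gaussianUnits, (g = fun z => ε * z) ∨ g = fun z => ε * conj z}

theorem iterate_four_eq_id_of_mem_squarePointGroup {g : ℂ → ℂ} (hg : g ∈ squarePointGroup) :
    g^[4] = id := by
  obtain ⟨ε, hε, rfl | rfl⟩ := hg <;> funext z <;> obtain rfl | rfl | rfl | rfl := hε <;>
    simp [← mul_assoc]

theorem mapsTo_squareLattice_of_mem_squarePointGroup {g : ℂ → ℂ} (hg : g ∈ squarePointGroup) :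
    Set.MapsTo g squareLattice squareLattice := by
  obtain ⟨ε, hε, rfl | rfl⟩ := hg
  · exact fun _ hz => gaussianUnit_mul_mem_squareLattice hε hz
  · exact fun _ hz => gaussianUnit_mul_mem_squareLattice hε (conj_mem_squareLattice hz)

theorem exists_linearIsometryEquiv_of_mem_squarePointGroup {g : ℂ → ℂ}
    (hg : g ∈ squarePointGroup) : ∃ f : ℂ ≃ₗᵢ[ℝ] ℂ, ⇑f = g := by
  obtain ⟨ε, hε, hg⟩ := hg
  let a : Circle := ⟨ε, mem_sphere_zero_iff_norm.2 (norm_eq_one_of_mem_gaussianUnits hε)⟩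
  obtain rfl | rfl := hg
  · exact ⟨rotation a, rfl⟩
  · exact ⟨conjLIE.trans (rotation a), rfl⟩

theorem mem_squarePointGroup_of_image_squareLattice_eq (f : ℂ ≃ₗᵢ[ℝ] ℂ)
    (hf : f '' squareLattice = squareLattice) : ⇑f ∈ squarePointGroup := by
  have hf1 : f 1 ∈ squareLattice := by
    have h1 : (1 : ℂ) ∈ squareLattice := AddSubgroup.subset_closure (by simp)
    exact hf.subset ⟨1, h1, rfl⟩
  refine ⟨f 1, mem_gaussianUnits_of_norm_eq_one hf1 (by simp), ?_⟩
  obtain ⟨a, rfl | rfl⟩ := linear_isometry_complex f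
  · left; funext z; simp
  · right; funext z; simp

theorem mem_pointColorGroup_squareLattice_iff {Γ : AddSubgroup ℂ} (hle : Γ ≤ squareLattice)
    {g : ℂ → ℂ} :
    g ∈ pointColorGroup squareLattice Γ ↔ g ∈ squarePointGroup ∧ Set.MapsTo g Γ Γ := by
  rw [mem_pointColorGroup_iff hle]
  constructor
  · rintro ⟨f, rfl, hlattice, hΓ⟩
    exact ⟨mem_squarePointGroup_of_image_squareLattice_eq f hlattice,
      Set.mapsTo_iff_image_subset.2 hΓ.subset⟩
  · rintro ⟨hg, hΓ⟩
    obtain ⟨f, rfl⟩ := exists_linearIsometryEquiv_of_mem_squarePointGroup hg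
    have hfour := iterate_four_eq_id_of_mem_squarePointGroup hg
    exact ⟨f, rfl, image_eq_of_mapsTo_of_iterate_eq_id hfour
      (mapsTo_squareLattice_of_mem_squarePointGroup hg),
      image_eq_of_mapsTo_of_iterate_eq_id hfour hΓ⟩

/-- The point group of type `cmm`: the identity, the `180°`-rotation and the two diagonal
reflections. -/
def cmmPointGroup : Set (ℂ → ℂ) :=
  {fun z => z, fun z => -z, fun z => I * conj z, fun z => -(I * conj z)}

theorem I_mul_notMem_cmmPointGroup : (fun z => I * z) ∉ cmmPointGroup := by
  rintro (h | h | h | h)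
  · simpa [Complex.ext_iff] using congrFun h 1
  · simpa [Complex.ext_iff] using congrFun h 1
  · have hI : (-1 : ℂ) = 1 := by simpa using congrFun h I
    norm_num at hI
  · simpa [self_eq_neg] using congrFun h 1

theorem mapsTo_neg_iff {α A : Type*} [AddGroup A] {f : α → A} {s : Set α} {Γ : AddSubgroup A} :
    Set.MapsTo (fun x => -f x) s Γ ↔ Set.MapsTo f s Γ := by
  simp [Set.MapsTo]

theorem pointColorGroup_eq_cmmPointGroup_iff {Γ : AddSubgroup ℂ} (hle : Γ ≤ squareLattice) :
    pointColorGroup squareLattice Γ = cmmPointGroup ↔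
      Set.MapsTo (fun z => I * conj z) Γ Γ ∧ ¬ Set.MapsTo (fun z => I * z) Γ Γ := by
  simp only [Set.ext_iff, mem_pointColorGroup_squareLattice_iff hle]
  constructor
  · intro h
    refine ⟨((h _).2 (by simp [cmmPointGroup])).2, fun hrot => ?_⟩
    exact I_mul_notMem_cmmPointGroup
      ((h _).1 ⟨⟨I, by simp [gaussianUnits], Or.inl rfl⟩, hrot⟩)
  · rintro ⟨hrefl, hrot⟩ g
    have hconj : ¬ Set.MapsTo (fun z : ℂ => conj z) Γ Γ := fun hconj =>
      hrot (by simpa [Function.comp_def] using hrefl.comp hconj)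
    constructor
    · rintro ⟨⟨ε, rfl | rfl | rfl | rfl, rfl | rfl⟩, hg⟩ <;>
        simp_all [mapsTo_neg_iff, cmmPointGroup]
    · rintro (rfl | rfl | rfl | rfl)
      · exact ⟨⟨1, by simp [gaussianUnits]⟩, Set.mapsTo_id _⟩
      · exact ⟨⟨-1, by simp [gaussianUnits]⟩, mapsTo_neg_iff.2 (Set.mapsTo_id _)⟩
      · exact ⟨⟨I, by simp [gaussianUnits]⟩, hrefl⟩
      · exact ⟨⟨-I, by simp [gaussianUnits]⟩, mapsTo_neg_iff.2 hrefl⟩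

theorem mapsTo_closure_pair_iff {A B : Type*} [AddGroup A] [AddGroup B] (φ : A →+ B) {x y : A}
    {Γ : AddSubgroup B} :
    Set.MapsTo φ (AddSubgroup.closure {x, y}) Γ ↔ φ x ∈ Γ ∧ φ y ∈ Γ :=
  (AddSubgroup.closure_le (Γ.comap φ)).trans (by simp [Set.insert_subset_iff])

section PlaneLattice

theorem cramer_im_mul_conj (u v w : ℂ) :
    (u * conj v).im * w = (w * conj v).im * u - (w * conj u).im * v := by
  apply Complex.ext <;>
    simp only [mul_re, mul_im, sub_re, sub_im, ofReal_re, ofReal_im, conj_re, conj_im] <;> ring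

variable {u v w : ℂ} {d m n : ℤ}

theorem im_mul_conj_ne_zero (hind : LinearIndependent ℝ ![u, v]) : (u * conj v).im ≠ 0 := by
  intro hzero
  have hcramer := cramer_im_mul_conj u v (I * v)
  have hcoeff := LinearIndependent.pair_iff.1 hind ((I * v) * conj v).im (-((I * v) * conj u).im)
    (by
      rw [hzero, ofReal_zero] at hcramer
      rw [real_smul, real_smul, ofReal_neg]
      linear_combination -hcramer)
  have hv : v = 0 := by
    rw [← normSq_eq_zero]
    simpa [mul_assoc, mul_conj] using hcoeff.1
  exact hind.ne_zero 1 hv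

theorem mem_closure_pair_iff_dvd (hd : d ≠ 0) (huv : (u * conj v).im = d)
    (hm : (w * conj v).im = m) (hn : (w * conj u).im = n) :
    w ∈ AddSubgroup.closure {u, v} ↔ d ∣ m ∧ d ∣ n := by
  simp only [AddSubgroup.mem_closure_pair, zsmul_eq_mul]
  constructor
  · rintro ⟨a, b, rfl⟩
    have hma : (m : ℝ) = d * a := by
      rw [← hm, ← huv]
      simp only [mul_im, add_im, add_re, mul_re, intCast_re, intCast_im, conj_re, conj_im]
      ring
    have hnb : (n : ℝ) = d * -b := by
      rw [← hn, ← huv]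
      simp only [mul_im, add_im, add_re, mul_re, intCast_re, intCast_im, conj_re, conj_im]
      ring
    exact ⟨⟨a, mod_cast hma⟩, ⟨-b, mod_cast hnb⟩⟩
  · rintro ⟨⟨a, rfl⟩, ⟨b, rfl⟩⟩
    have hcramer := cramer_im_mul_conj u v w
    rw [huv, hm, hn] at hcramer
    push_cast at hcramer
    refine ⟨a, -b, mul_left_cancel₀ (Int.cast_ne_zero.2 hd : (d : ℂ) ≠ 0) ?_⟩
    push_cast
    linear_combination -hcramer

theorem im_I_mul_conj_mul_conj (z w : ℂ) : (I * conj z * conj w).im = (z * w).re := by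
  rw [mul_assoc, ← map_mul, I_mul_im, conj_re]

theorem mapsTo_I_mul_conj_closure_pair_iff {ru2 rv2 rmuv : ℤ} (hd : d ≠ 0)
    (huv : (u * conj v).im = d) (hu2 : (u ^ 2).re = ru2) (hv2 : (v ^ 2).re = rv2)
    (hmuv : (u * v).re = rmuv) :
    Set.MapsTo (fun z => I * conj z) (AddSubgroup.closure {u, v}) (AddSubgroup.closure {u, v}) ↔
      d ∣ ru2 ∧ d ∣ rv2 ∧ d ∣ rmuv := by
  have hu : I * conj u ∈ AddSubgroup.closure {u, v} ↔ d ∣ rmuv ∧ d ∣ ru2 :=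
    mem_closure_pair_iff_dvd hd huv ((im_I_mul_conj_mul_conj u v).trans hmuv)
      ((im_I_mul_conj_mul_conj u u).trans (sq u ▸ hu2))
  have hv : I * conj v ∈ AddSubgroup.closure {u, v} ↔ d ∣ rv2 ∧ d ∣ rmuv :=
    mem_closure_pair_iff_dvd hd huv ((im_I_mul_conj_mul_conj v v).trans (sq v ▸ hv2))
      ((im_I_mul_conj_mul_conj v u).trans (mul_comm u v ▸ hmuv))
  exact (mapsTo_closure_pair_iff
    ((AddMonoidHom.mulLeft I).comp (starRingEnd ℂ).toAddMonoidHom)).trans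
      ((and_congr hu hv).trans (by tauto))

theorem mapsTo_I_mul_closure_pair_iff {nu nv ruv : ℤ} (hd : d ≠ 0)
    (huv : (u * conj v).im = d) (hnu : normSq u = nu) (hnv : normSq v = nv)
    (hruv : (u * conj v).re = ruv) :
    Set.MapsTo (fun z => I * z) (AddSubgroup.closure {u, v}) (AddSubgroup.closure {u, v}) ↔
      d ∣ nu ∧ d ∣ nv ∧ d ∣ ruv := by
  have hu : I * u ∈ AddSubgroup.closure {u, v} ↔ d ∣ ruv ∧ d ∣ nu :=
    mem_closure_pair_iff_dvd hd huv (by rw [mul_assoc, I_mul_im, hruv])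
      (by rw [mul_assoc, I_mul_im, mul_conj, ofReal_re, hnu])
  have hv : I * v ∈ AddSubgroup.closure {u, v} ↔ d ∣ nv ∧ d ∣ ruv :=
    mem_closure_pair_iff_dvd hd huv (by rw [mul_assoc, I_mul_im, mul_conj, ofReal_re, hnv])
      (by rw [mul_assoc, I_mul_im, ← hruv, ← conj_re, map_mul, conj_conj, mul_comm])
  exact (mapsTo_closure_pair_iff (AddMonoidHom.mulLeft I)).trans
    ((and_congr hu hv).trans (by tauto))

end PlaneLattice

theorem pointColorGroup_cmm_general {u v : ℂ} (hu : u ∈ squareLattice) (hv : v ∈ squareLattice)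
    (hind : LinearIndependent ℝ ![u, v]) {ruv iuv nu nv ru2 rv2 rmuv : ℤ}
    (hruv : (u * conj v).re = ruv) (hiuv : (u * conj v).im = iuv)
    (hnu : normSq u = nu) (hnv : normSq v = nv)
    (hu2 : (u ^ 2).re = ru2) (hv2 : (v ^ 2).re = rv2) (hmuv : (u * v).re = rmuv) :
    pointColorGroup squareLattice (AddSubgroup.closure {u, v}) = cmmPointGroup ↔
      (iuv ∣ ru2 ∧ iuv ∣ rv2 ∧ iuv ∣ rmuv) ∧ ¬ (iuv ∣ nu ∧ iuv ∣ nv ∧ iuv ∣ ruv) := by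
  have hle : AddSubgroup.closure {u, v} ≤ squareLattice :=
    (AddSubgroup.closure_le _).2 (Set.pair_subset hu hv)
  have hd : iuv ≠ 0 := by exact_mod_cast hiuv ▸ im_mul_conj_ne_zero hind
  rw [pointColorGroup_eq_cmmPointGroup_iff hle,
    mapsTo_I_mul_conj_closure_pair_iff hd hiuv hu2 hv2 hmuv,
    mapsTo_I_mul_closure_pair_iff hd hiuv hnu hnv hruv]

/-- Case (d) for the square lattice `Γ₁ = ℤ[i]`: if `Im(u·conj v)` divides all of
`Re(u²)`, `Re(v²)`, `Re(uv)` but none of `N(u)`, `N(v)`, `Re(u·conj v)`, then the point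
group of the color group of the coloring of `Γ₁` determined by `Γ₂ = ⟨u, v⟩_ℤ` consists
of the identity, the `180°`-rotation, and the diagonal reflections `z ↦ i·conj z` and
`z ↦ -i·conj z` (type `cmm`). -/
theorem pointColorGroup_cmm (u v : ℂ) (u₁ u₂ v₁ v₂ : ℤ)
    (hu : u = u₁ + u₂ * I) (hv : v = v₁ + v₂ * I)
    (hind : LinearIndependent ℝ ![u, v])
    (Γ₁ Γ₂ : AddSubgroup ℂ)
    (hΓ₁ : Γ₁ = AddSubgroup.closure ({1, I} : Set ℂ))
    (hΓ₂ : Γ₂ = AddSubgroup.closure ({u, v} : Set ℂ))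
    (ruv iuv nu nv ru2 iu2 rv2 iv2 rmuv imuv : ℤ)
    (hruv : u * starRingEnd ℂ v = ruv + iuv * I)
    (hnu : u * starRingEnd ℂ u = (nu : ℂ))
    (hnv : v * starRingEnd ℂ v = (nv : ℂ))
    (hu2 : u ^ 2 = ru2 + iu2 * I)
    (hv2 : v ^ 2 = rv2 + iv2 * I)
    (hmuv : u * v = rmuv + imuv * I)
    (hdvd : iuv ∣ ru2 ∧ iuv ∣ rv2 ∧ iuv ∣ rmuv)
    (hndvd : ¬ iuv ∣ nu ∧ ¬ iuv ∣ nv ∧ ¬ iuv ∣ ruv) :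
    pointColorGroup Γ₁ Γ₂ =
      {fun z => z, fun z => -z, fun z => I * starRingEnd ℂ z,
        fun z => -(I * starRingEnd ℂ z)} := by
  subst hΓ₁ hΓ₂
  have hnu' : normSq u = nu := by exact_mod_cast (mul_conj u).symm.trans hnu
  have hnv' : normSq v = nv := by exact_mod_cast (mul_conj v).symm.trans hnv
  exact (pointColorGroup_cmm_general (mem_squareLattice_iff.2 ⟨u₁, u₂, hu.symm⟩)
    (mem_squareLattice_iff.2 ⟨v₁, v₂, hv.symm⟩) hind (by simp [hruv]) (by simp [hruv]) hnu' hnv'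
    (by simp [hu2]) (by simp [hv2]) (by simp [hmuv])).2 ⟨hdvd, fun h => hndvd.2.2 h.2.2⟩
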